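/- arXiv:0807.1679 — 4 statements merged into one kernel-verified Lean document; each statement's English description precedes it below -/
import Mathlib

section
/- Let n ≥ 1 and let f : {0,1}^n → ℝ be a nonzero function. Set ρ = (1/n) · Ent(f²)/E[f²]. Then E_x Σ_{y∼x} (f(x) − f(y))² ≥ C(ρ) · Ent(f²), where C(x) = (4/x) · (1/2 − √(H⁻¹(log 2 − x)·(1 − H⁻¹(log 2 − x)))) for x ∈ (0, log 2] and C(0) = 2. -/
/-- Expectation of `g` over the uniform measure on the Hamming cube `{0,1}^n`. -/
noncomputable def cubeE (n : ℕ) (g : (Fin n → Bool) → ℝ) : ℝ :=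
  (∑ x : Fin n → Bool, g x) / 2 ^ n

/-- `E_x ∑_{y ∼ x} (f x - f y)^2` on the Hamming cube `{0,1}^n`. -/
noncomputable def cubeD2 (n : ℕ) (f : (Fin n → Bool) → ℝ) : ℝ :=
  cubeE n (fun x => ∑ i : Fin n, (f x - f (Function.update x i (!x i))) ^ 2)

/-- `Ent(f²) = E[f² log f²] - E[f²] log E[f²]` (note `Real.log 0 = 0`). -/
noncomputable def cubeEnt (n : ℕ) (f : (Fin n → Bool) → ℝ) : ℝ :=
  cubeE n (fun x => f x ^ 2 * Real.log (f x ^ 2)) -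
    cubeE n (fun x => f x ^ 2) * Real.log (cubeE n (fun x => f x ^ 2))

/-- The function `C` of the modified log-Sobolev inequality, given an inverse `Hinv`
of the entropy function `H` on `[0,1/2]`: `C 0 = 2` and for `x ≠ 0`,
`C x = (4/x)·(1/2 − √(H⁻¹(log 2 − x)(1 − H⁻¹(log 2 − x))))`. -/
noncomputable def Cfun (Hinv : ℝ → ℝ) (x : ℝ) : ℝ :=
  if x = 0 then 2
  else (4 / x) *
    (1 / 2 - Real.sqrt (Hinv (Real.log 2 - x) * (1 - Hinv (Real.log 2 - x))))

/-!
For a function on two points with squared values `s p` and `s (1 - p)`, the energy is at least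
`s (1 - 2 √(p (1 - p)))` and the entropy of the square is `s / 2 * (log 2 - binEntropy p)`. Now
`√(p (1 - p))` is a concave function of `binEntropy p`: writing `L = log (1 - p) - log p`, the
slope of one against the other is `sinh (L / 2) / L`, which increases with `L`. Hence the two-point
energy lies above each tangent line, that is, above a linear combination of the mean and the entropy
of the square. Such linear bounds tensorize because entropy is subadditive over coordinates, and on
the cube the tangent at `H⁻¹(log 2 - ρ)` gives the sharpest one.
-/

open Function Set Real
open scoped BigOperators

section LogSum

lemma sub_le_mul_log_sub_log {x y : ℝ} (hx : 0 ≤ x) (hy : 0 ≤ y) (hxy : y = 0 → x = 0) :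
    x - y ≤ x * (log x - log y) := by
  rcases hx.eq_or_lt with rfl | hx
  · simpa
  · have hy : 0 < y := hy.lt_of_ne fun h => hx.ne' (hxy h.symm)
    have hlog := mul_le_mul_of_nonneg_left (log_le_sub_one_of_pos (div_pos hy hx)) hx.le
    rw [log_div hy.ne' hx.ne', mul_sub x (y / x), mul_div_cancel₀ _ hx.ne'] at hlog
    linarith

variable {ι : Type*} [Fintype ι]

lemma expect_mul_log_sub_log_le {a b : ι → ℝ} (ha : 0 ≤ a) (hb : 0 ≤ b)
    (hab : ∀ i, b i = 0 → a i = 0) :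
    (𝔼 i, a i) * (log (𝔼 i, a i) - log (𝔼 i, b i)) ≤ 𝔼 i, a i * (log (a i) - log (b i)) := by
  rcases (Finset.expect_nonneg fun i _ => ha i).eq_or_lt with hA | hA
  · have hzero := (Fintype.expect_eq_zero_iff_of_nonneg ha).1 hA.symm
    simp [hzero]
  have hB : 0 < 𝔼 i, b i := (Finset.expect_nonneg fun i _ => hb i).lt_of_ne fun h => hA.ne' <| by
    have hzero := (Fintype.expect_eq_zero_iff_of_nonneg hb).1 h.symm
    exact Finset.expect_eq_zero fun i _ => hab i (congrFun hzero i)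
  set A := 𝔼 i, a i with hAdef
  set B := 𝔼 i, b i with hBdef
  have hterm (i : ι) : a i * (log A - log B) + a i - b i * (A / B) ≤
      a i * (log (a i) - log (b i)) := by
    have hAB : 0 < A / B := div_pos hA hB
    have hgibbs := sub_le_mul_log_sub_log (ha i) (mul_nonneg (hb i) hAB.le) fun h =>
      hab i ((mul_eq_zero.1 h).resolve_right hAB.ne')
    rcases eq_or_ne (b i) 0 with hbi | hbi
    · simp [hab i hbi, hbi]
    · rw [log_mul hbi hAB.ne', log_div hA.ne' hB.ne'] at hgibbs
      linarith
  calc A * (log A - log B) = A * (log A - log B) + A - B * (A / B) := by field_simp; ring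
    _ = 𝔼 i, (a i * (log A - log B) + a i - b i * (A / B)) := by
      simp only [Finset.expect_sub_distrib, Finset.expect_add_distrib, ← Finset.expect_mul,
        ← hAdef, ← hBdef]
    _ ≤ 𝔼 i, a i * (log (a i) - log (b i)) := Finset.expect_le_expect fun i _ => hterm i

end LogSum

section UniformEntropy

variable {ι κ : Type*} [Fintype ι] [Fintype κ]

/-- The entropy `𝔼 g log g - 𝔼 g log 𝔼 g` of a function on a finite type, for the uniform
probability measure. -/
noncomputable def uniformEntropy (g : ι → ℝ) : ℝ :=
  𝔼 i, g i * log (g i) - (𝔼 i, g i) * log (𝔼 i, g i)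

lemma uniformEntropy_comp_equiv (e : ι ≃ κ) (g : κ → ℝ) :
    uniformEntropy (g ∘ e) = uniformEntropy g := by
  unfold uniformEntropy
  rw [Fintype.expect_equiv e (fun i => (g ∘ e) i * log ((g ∘ e) i)) (fun k => g k * log (g k))
    fun _ => rfl, Fintype.expect_equiv e (g ∘ e) g fun _ => rfl]

lemma uniformEntropy_eq_expect (g : ι → ℝ) :
    uniformEntropy g = 𝔼 i, g i * (log (g i) - log (𝔼 i, g i)) := by
  simp only [uniformEntropy, mul_sub, Finset.expect_sub_distrib, Finset.expect_mul]

lemma uniformEntropy_nonneg {g : ι → ℝ} (hg : 0 ≤ g) : 0 ≤ uniformEntropy g := by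
  cases isEmpty_or_nonempty ι
  · simp [uniformEntropy]
  · have h := expect_mul_log_sub_log_le hg zero_le_one fun _ h => absurd h one_ne_zero
    simp only [Pi.one_apply, Fintype.expect_one, log_one, sub_zero] at h
    exact sub_nonneg.2 h

lemma uniformEntropy_le_log_card_mul_expect {g : ι → ℝ} (hg : 0 ≤ g) :
    uniformEntropy g ≤ log (Fintype.card ι) * 𝔼 i, g i := by
  rw [uniformEntropy_eq_expect, mul_comm, Finset.expect_mul]
  refine Finset.expect_le_expect fun i _ => ?_
  rcases (hg i).eq_or_lt with hi | hi
  · simp [← hi]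
  have : Nonempty ι := ⟨i⟩
  have hcard : (0 : ℝ) < Fintype.card ι := Nat.cast_pos.2 Fintype.card_pos
  have hle : g i ≤ Fintype.card ι * 𝔼 i, g i := by
    rw [Fintype.card_mul_expect]
    exact Finset.single_le_sum (fun j _ => hg j) (Finset.mem_univ i)
  have hlog := log_le_log hi hle
  rw [log_mul hcard.ne' (pos_of_mul_pos_right (hi.trans_le hle) hcard.le).ne'] at hlog
  exact mul_le_mul_of_nonneg_left (sub_le_iff_le_add.2 hlog) hi.le

lemma uniformEntropy_expect_le {g : ι → κ → ℝ} (hg : 0 ≤ g) :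
    uniformEntropy (fun i => 𝔼 j, g i j) ≤ 𝔼 j, uniformEntropy fun i => g i j := by
  simp only [uniformEntropy_eq_expect]
  rw [Finset.expect_comm (s := Finset.univ (α := κ)),
    Finset.expect_comm (s := Finset.univ (α := ι)) (t := Finset.univ (α := κ))
      (f := fun i j => g i j)]
  refine Finset.expect_le_expect fun i _ =>
    expect_mul_log_sub_log_le (hg i) (fun j => Finset.expect_nonneg fun i _ => hg i j)
      fun j hj => ?_
  exact congrFun ((Fintype.expect_eq_zero_iff_of_nonneg fun i => hg i j).1 hj) i

lemma uniformEntropy_prod (g : ι × κ → ℝ) :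
    uniformEntropy g =
      𝔼 i, uniformEntropy (fun j => g (i, j)) + uniformEntropy fun i => 𝔼 j, g (i, j) := by
  simp only [uniformEntropy, Finset.expect_sub_distrib, ← Finset.univ_product_univ,
    Finset.expect_product]
  ring

lemma uniformEntropy_prod_le {g : ι × κ → ℝ} (hg : 0 ≤ g) :
    uniformEntropy g ≤
      𝔼 i, uniformEntropy (fun j => g (i, j)) + 𝔼 j, uniformEntropy fun i => g (i, j) := by
  rw [uniformEntropy_prod]
  gcongr
  exact uniformEntropy_expect_le (g := fun i j => g (i, j)) fun i j => hg (i, j)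

end UniformEntropy

section Tensorization

variable {α : Type*} [Fintype α]

lemma expect_fin_cons {n : ℕ} (F : (Fin (n + 1) → α) → ℝ) :
    𝔼 x, F x = 𝔼 a, 𝔼 y : Fin n → α, F (Fin.cons a y) := by
  rw [← Finset.expect_product', Finset.univ_product_univ]
  exact (Fintype.expect_equiv (Fin.consEquiv fun _ => α) _ _ fun _ => rfl).symm

lemma expect_expect_update {ι : Type*} [Fintype ι] [DecidableEq ι] [Nonempty α]
    (i : ι) (F : (ι → α) → ℝ) : 𝔼 x, 𝔼 a, F (update x i a) = 𝔼 x, F x := by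
  let swap : (ι → α) × α → (ι → α) × α := fun p => (update p.1 i p.2, p.1 i)
  have hswap : Involutive swap := fun p => by simp [swap]
  calc 𝔼 x, 𝔼 a, F (update x i a) = 𝔼 p : (ι → α) × α, F (update p.1 i p.2) := by
        rw [← Finset.expect_product', Finset.univ_product_univ]
    _ = 𝔼 p : (ι → α) × α, F p.1 :=
        Fintype.expect_bijective swap hswap.bijective _ _ fun _ => rfl
    _ = 𝔼 x, F x := by
        rw [← Finset.univ_product_univ, Finset.expect_product]
        simp only [Fintype.expect_const]

lemma uniformEntropy_le_sum_expect_update [Nonempty α] :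
    ∀ {n : ℕ} {g : (Fin n → α) → ℝ}, 0 ≤ g →
      uniformEntropy g ≤ ∑ i, 𝔼 x, uniformEntropy fun a => g (update x i a)
  | 0, g, _ => by simp [uniformEntropy]
  | n + 1, g, hg => by
    have hcons : 0 ≤ g ∘ Fin.consEquiv fun _ => α := fun p => hg _
    calc uniformEntropy g = uniformEntropy (g ∘ Fin.consEquiv fun _ => α) :=
          (uniformEntropy_comp_equiv _ g).symm
      _ ≤ 𝔼 a, uniformEntropy (fun y : Fin n → α => g (Fin.cons a y)) +
            𝔼 y : Fin n → α, uniformEntropy fun a => g (Fin.cons a y) :=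
          uniformEntropy_prod_le hcons
      _ ≤ 𝔼 a, ∑ i, 𝔼 y : Fin n → α, uniformEntropy (fun b => g (Fin.cons a (update y i b))) +
            𝔼 y : Fin n → α, uniformEntropy fun a => g (Fin.cons a y) := by
          gcongr with a
          exact uniformEntropy_le_sum_expect_update fun y => hg _
      _ = ∑ i, 𝔼 x, uniformEntropy fun a => g (update x i a) := by
          simp only [Fin.sum_univ_succ, expect_fin_cons, Fin.update_cons_zero, ← Fin.cons_update,
            Fintype.expect_const, Finset.expect_sum_comm]
          ring

lemma log_sobolev_tensorization [Nonempty α] {c k : ℝ} {E : (α → ℝ) → ℝ}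
    (hk : 0 ≤ k)
    (hE : ∀ φ : α → ℝ, c * 𝔼 a, φ a ^ 2 + k * uniformEntropy (fun a => φ a ^ 2) ≤ E φ)
    {n : ℕ} (f : (Fin n → α) → ℝ) :
    c * (n * 𝔼 x, f x ^ 2) + k * uniformEntropy (fun x => f x ^ 2) ≤
      ∑ i, 𝔼 x, E fun a => f (update x i a) := by
  calc c * (n * 𝔼 x, f x ^ 2) + k * uniformEntropy (fun x => f x ^ 2)
      ≤ c * (n * 𝔼 x, f x ^ 2) +
          k * ∑ i, 𝔼 x, uniformEntropy (fun a => f (update x i a) ^ 2) := by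
        gcongr
        exact uniformEntropy_le_sum_expect_update fun x => sq_nonneg (f x)
    _ = ∑ i, 𝔼 x, (c * 𝔼 a, f (update x i a) ^ 2 +
          k * uniformEntropy fun a => f (update x i a) ^ 2) := by
        simp only [Finset.expect_add_distrib, ← Finset.mul_expect, Finset.sum_add_distrib,
          ← Finset.mul_sum, expect_expect_update _ fun x => f x ^ 2, Finset.sum_const,
          Finset.card_univ, Fintype.card_fin, nsmul_eq_mul]
    _ ≤ ∑ i, 𝔼 x, E fun a => f (update x i a) := by
        gcongr
        exact hE _

end Tensorization

section TangentLine

-- `f` is a concave function of `g`, with slope `r`, hence lies below its tangent at `q`.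
lemma sub_le_mul_sub_of_antitoneOn_slope {f g g' r : ℝ → ℝ} {a b p q : ℝ}
    (hf : ContinuousOn f (Icc a b)) (hg : ContinuousOn g (Icc a b))
    (hf' : ∀ x ∈ Ioo a b, HasDerivAt f (r x * g' x) x)
    (hg' : ∀ x ∈ Ioo a b, HasDerivAt g (g' x) x) (hg'_pos : ∀ x ∈ Ioo a b, 0 < g' x)
    (hr : AntitoneOn r (Ioo a b)) (hp : p ∈ Icc a b) (hq : q ∈ Ioo a b) :
    f p - f q ≤ r q * (g p - g q) := by
  have hq' := Ioo_subset_Icc_self hq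
  have hmono : MonotoneOn g (Icc a b) := by
    refine monotoneOn_of_deriv_nonneg (convex_Icc a b) hg (fun x hx => ?_) fun x hx => ?_ <;>
      rw [interior_Icc] at hx
    · exact (hg' x hx).differentiableAt.differentiableWithinAt
    · exact (hg' x hx).deriv ▸ (hg'_pos x hx).le
  have cauchy {x y : ℝ} (hx : x ∈ Icc a b) (hy : y ∈ Icc a b) (hxy : x < y) :
      ∃ ξ ∈ Ioo x y, ξ ∈ Ioo a b ∧ f y - f x = r ξ * (g y - g x) := by
    have hIcc := Icc_subset_Icc hx.1 hy.2
    have hIoo := Ioo_subset_Ioo hx.1 hy.2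
    obtain ⟨ξ, hξ, h⟩ := exists_ratio_hasDerivAt_eq_ratio_slope f _ hxy (hf.mono hIcc)
      (fun z hz => hf' z (hIoo hz)) g _ (hg.mono hIcc) fun z hz => hg' z (hIoo hz)
    refine ⟨ξ, hξ, hIoo hξ, mul_right_cancel₀ (hg'_pos ξ (hIoo hξ)).ne' ?_⟩
    linear_combination -h
  rcases lt_trichotomy p q with hpq | rfl | hqp
  · obtain ⟨ξ, hξ, hξ', h⟩ := cauchy hp hq' hpq
    have := mul_le_mul_of_nonneg_right (hr hξ' hq hξ.2.le) (sub_nonneg.2 (hmono hp hq' hpq.le))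
    linarith
  · simp
  · obtain ⟨ξ, hξ, hξ', h⟩ := cauchy hq' hp hqp
    exact h ▸ mul_le_mul_of_nonneg_right (hr hq hξ' hξ.1.le) (sub_nonneg.2 (hmono hq' hp hqp.le))

lemma convexOn_sinh_Ici : ConvexOn ℝ (Ici 0) sinh := by
  refine MonotoneOn.convexOn_of_deriv (convex_Ici 0) (by fun_prop) (by fun_prop) ?_
  rw [interior_Ici, Real.deriv_sinh]
  exact cosh_strictMonoOn.monotoneOn.mono Ioi_subset_Ici_self

lemma monotoneOn_sinh_div_self : MonotoneOn (fun t => sinh t / t) (Ioi 0) := by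
  intro s (hs : 0 < s) t (ht : 0 < t) hst
  simpa using convexOn_sinh_Ici.secant_mono self_mem_Ici hs.le ht.le hs.ne' ht.ne' hst

lemma log_one_sub_sub_log_pos {p : ℝ} (hp : p ∈ Ioo (0 : ℝ) (1 / 2)) :
    0 < log (1 - p) - log p :=
  sub_pos.2 (log_lt_log hp.1 (by linarith [hp.2]))

lemma hasDerivAt_sqrt_mul_one_sub {p : ℝ} (hp : p ∈ Ioo (0 : ℝ) 1) :
    HasDerivAt (fun x => √(x * (1 - x))) (sinh ((log (1 - p) - log p) / 2)) p := by
  have hp0 := hp.1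
  have hp1 : 0 < 1 - p := sub_pos.2 hp.2
  have hexp : exp ((log (1 - p) - log p) / 2) = √(1 - p) / √p := by
    rw [sub_div, exp_sub, exp_half, exp_half, exp_log hp1, exp_log hp0]
  have hmul : HasDerivAt (fun x : ℝ => x * (1 - x)) (1 * (1 - p) + p * (-1)) p :=
    (hasDerivAt_id p).mul ((hasDerivAt_id p).const_sub 1)
  refine (hmul.sqrt (mul_pos hp0 hp1).ne').congr_deriv ?_
  have := sqrt_pos.2 hp0
  have := sqrt_pos.2 hp1
  rw [sinh_eq, exp_neg, hexp, sqrt_mul hp0.le]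
  field_simp
  rw [sq_sqrt hp0.le, sq_sqrt hp1.le]
  ring

/-- The derivative of `√(p (1 - p))` with respect to `binEntropy p` on `(0, 1/2)`. In terms of
`L = log (1 - p) - log p`, the two functions have derivatives `sinh (L / 2)` and `L`. -/
noncomputable def sqrtEntropySlope (p : ℝ) : ℝ :=
  sinh ((log (1 - p) - log p) / 2) / (log (1 - p) - log p)

lemma sqrtEntropySlope_nonneg {p : ℝ} (hp : p ∈ Ioo (0 : ℝ) (1 / 2)) : 0 ≤ sqrtEntropySlope p :=
  have hL := (log_one_sub_sub_log_pos hp).le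
  div_nonneg (sinh_nonneg_iff.2 (by positivity)) hL

lemma antitoneOn_sqrtEntropySlope : AntitoneOn sqrtEntropySlope (Ioo 0 (1 / 2)) := by
  intro p hp q hq hpq
  have hL : log (1 - q) - log q ≤ log (1 - p) - log p :=
    sub_le_sub (log_le_log (by linarith [hq.2]) (by linarith)) (log_le_log hp.1 hpq)
  have hslope (x : ℝ) : sqrtEntropySlope x =
      sinh ((log (1 - x) - log x) / 2) / ((log (1 - x) - log x) / 2) / 2 := by
    rw [sqrtEntropySlope, div_div, div_mul_cancel₀ _ two_ne_zero]
  rw [hslope, hslope]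
  gcongr ?_ / 2
  exact monotoneOn_sinh_div_self (half_pos (log_one_sub_sub_log_pos hq))
    (half_pos (log_one_sub_sub_log_pos hp)) (by gcongr)

lemma sqrt_mul_one_sub_sub_le {p q : ℝ} (hp : p ∈ Icc (0 : ℝ) 1) (hq : q ∈ Ioo (0 : ℝ) (1 / 2)) :
    √(p * (1 - p)) - √(q * (1 - q)) ≤ sqrtEntropySlope q * (binEntropy p - binEntropy q) := by
  wlog hp' : p ≤ 1 / 2 generalizing p
  · have h := this (p := 1 - p) ⟨by linarith [hp.2], by linarith [hp.1]⟩ (by linarith)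
    rwa [binEntropy_one_sub, sub_sub_cancel, mul_comm (1 - p)] at h
  refine sub_le_mul_sub_of_antitoneOn_slope (f := fun x => √(x * (1 - x)))
    (g' := fun x => log (1 - x) - log x) (by fun_prop) (by fun_prop) (fun x hx => ?_)
    (fun x hx => hasDerivAt_binEntropy hx.1.ne' (by linarith [hx.2]))
    (fun x hx => log_one_sub_sub_log_pos hx) antitoneOn_sqrtEntropySlope ⟨hp.1, hp'⟩ hq
  rw [sqrtEntropySlope, div_mul_cancel₀ _ (log_one_sub_sub_log_pos hx).ne']
  exact hasDerivAt_sqrt_mul_one_sub ⟨hx.1, by linarith [hx.2]⟩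

end TangentLine

section TwoPoint

lemma expect_bool (g : Bool → ℝ) : 𝔼 b, g b = (g true + g false) / 2 := by
  rw [Fintype.expect_eq_sum_div_card, Fintype.sum_bool, Fintype.card_bool, Nat.cast_ofNat]

lemma uniformEntropy_bool {g : Bool → ℝ} {s p : ℝ} (htrue : g true = s * p)
    (hfalse : g false = s * (1 - p)) :
    uniformEntropy g = s / 2 * (log 2 - binEntropy p) := by
  have hmean : 𝔼 b, g b = s * 2⁻¹ := by rw [expect_bool, htrue, hfalse]; ring
  calc uniformEntropy g
      = negMulLog (s * 2⁻¹) - (negMulLog (s * p) + negMulLog (s * (1 - p))) / 2 := by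
        rw [uniformEntropy, hmean, expect_bool, htrue, hfalse]
        simp only [negMulLog]
        ring
    _ = s / 2 * (log 2 - binEntropy p) := by
        simp only [binEntropy_eq_negMulLog_add_negMulLog_one_sub, negMulLog_mul]
        simp only [negMulLog, log_inv]
        ring

lemma two_point_log_sobolev {q : ℝ} (hq : q ∈ Ioo (0 : ℝ) (1 / 2)) (φ : Bool → ℝ) :
    (2 - 4 * √(q * (1 - q)) - 4 * sqrtEntropySlope q * (log 2 - binEntropy q)) * 𝔼 b, φ b ^ 2 +
      4 * sqrtEntropySlope q * uniformEntropy (fun b => φ b ^ 2) ≤ (φ true - φ false) ^ 2 := by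
  obtain ⟨s, hs⟩ : ∃ s, s = φ true ^ 2 + φ false ^ 2 := ⟨_, rfl⟩
  obtain ⟨p, hp⟩ : ∃ p, p = φ true ^ 2 / s := ⟨_, rfl⟩
  have hs0 : 0 ≤ s := by rw [hs]; positivity
  have hpmem : p ∈ Icc (0 : ℝ) 1 := by
    rw [hp]
    exact ⟨by positivity, div_le_one_of_le₀ (by rw [hs]; linarith [sq_nonneg (φ false)]) hs0⟩
  have htrue : φ true ^ 2 = s * p := by
    rw [hp, mul_div_cancel_of_imp' fun h => ?_]
    linarith [sq_nonneg (φ true), sq_nonneg (φ false)]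
  have hfalse : φ false ^ 2 = s * (1 - p) := by linarith
  have hprod : φ true * φ false ≤ s * √(p * (1 - p)) := by
    calc φ true * φ false ≤ √((φ true * φ false) ^ 2) := le_sqrt_of_sq_le le_rfl
      _ = √(s ^ 2 * (p * (1 - p))) := by rw [mul_pow, htrue, hfalse]; ring_nf
      _ = s * √(p * (1 - p)) := by rw [sqrt_mul (sq_nonneg s), sqrt_sq hs0]
  have htangent := mul_le_mul_of_nonneg_left (sqrt_mul_one_sub_sub_le hpmem hq) hs0
  rw [uniformEntropy_bool htrue hfalse, expect_bool, ← hs]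
  linarith

end TwoPoint

section HammingCube

lemma cubeE_eq_expect (n : ℕ) (g : (Fin n → Bool) → ℝ) : cubeE n g = 𝔼 x, g x := by
  simp [cubeE, Fintype.expect_eq_sum_div_card]

lemma cubeEnt_eq_uniformEntropy (n : ℕ) (f : (Fin n → Bool) → ℝ) :
    cubeEnt n f = uniformEntropy fun x => f x ^ 2 := by
  simp only [cubeEnt, cubeE_eq_expect, uniformEntropy]

lemma cubeD2_eq_sum_expect_update (n : ℕ) (f : (Fin n → Bool) → ℝ) :
    cubeD2 n f = ∑ i, 𝔼 x, (f (update x i true) - f (update x i false)) ^ 2 := by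
  rw [cubeD2, cubeE_eq_expect, Finset.expect_sum_comm]
  refine Finset.sum_congr rfl fun i _ => Finset.expect_congr rfl fun x _ => ?_
  have hself : update x i (x i) = x := update_eq_self i x
  cases hxi : x i <;> rw [hxi] at hself <;> simp only [hself, Bool.not_true, Bool.not_false]
  exact sub_sq_comm _ _

lemma cubeE_nonneg {n : ℕ} {g : (Fin n → Bool) → ℝ} (hg : 0 ≤ g) : 0 ≤ cubeE n g :=
  cubeE_eq_expect n g ▸ Finset.expect_nonneg fun x _ => hg x

lemma cubeE_sq_pos {n : ℕ} {f : (Fin n → Bool) → ℝ} (hf : f ≠ 0) :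
    0 < cubeE n fun x => f x ^ 2 := by
  obtain ⟨x, hx⟩ := ne_iff.1 hf
  rw [cubeE_eq_expect]
  exact Finset.expect_pos' (fun x _ => sq_nonneg (f x))
    ⟨x, Finset.mem_univ x, sq_pos_of_ne_zero hx⟩

lemma cubeD2_nonneg (n : ℕ) (f : (Fin n → Bool) → ℝ) : 0 ≤ cubeD2 n f :=
  cubeE_nonneg fun _ => Finset.sum_nonneg fun _ _ => sq_nonneg _

lemma cubeEnt_div_mem_Icc (n : ℕ) (f : (Fin n → Bool) → ℝ) :
    cubeEnt n f / (n * cubeE n fun x => f x ^ 2) ∈ Icc 0 (log 2) := by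
  have hN : 0 ≤ n * cubeE n fun x => f x ^ 2 :=
    mul_nonneg n.cast_nonneg (cubeE_nonneg fun x => sq_nonneg (f x))
  have hlog : log (Fintype.card (Fin n → Bool)) = n * log 2 := by simp
  have hle := uniformEntropy_le_log_card_mul_expect fun x => sq_nonneg (f x)
  rw [hlog, ← cubeE_eq_expect, mul_right_comm, mul_comm] at hle
  rw [cubeEnt_eq_uniformEntropy]
  exact ⟨div_nonneg (uniformEntropy_nonneg fun x => sq_nonneg (f x)) hN,
    div_le_of_le_mul₀ hN (log_nonneg one_le_two) hle⟩

lemma cube_log_sobolev {n : ℕ} (f : (Fin n → Bool) → ℝ) {q : ℝ}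
    (hq : q ∈ Ioo (0 : ℝ) (1 / 2)) :
    (2 - 4 * √(q * (1 - q)) - 4 * sqrtEntropySlope q * (log 2 - binEntropy q)) *
        (n * cubeE n fun x => f x ^ 2) + 4 * sqrtEntropySlope q * cubeEnt n f ≤ cubeD2 n f := by
  have hslope := sqrtEntropySlope_nonneg hq
  rw [cubeE_eq_expect, cubeEnt_eq_uniformEntropy, cubeD2_eq_sum_expect_update]
  exact log_sobolev_tensorization (by positivity) (two_point_log_sobolev hq) f

lemma mul_cubeE_le_cubeD2_of_le_cubeEnt {n : ℕ} {f : (Fin n → Bool) → ℝ} {h : ℝ}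
    (hh : h ∈ Icc (0 : ℝ) (1 / 2))
    (hent : (log 2 - binEntropy h) * (n * cubeE n fun x => f x ^ 2) ≤ cubeEnt n f) :
    (2 - 4 * √(h * (1 - h))) * (n * cubeE n fun x => f x ^ 2) ≤ cubeD2 n f := by
  obtain rfl | hlt := hh.2.eq_or_lt
  · have hsqrt : √(1 / 2 * (1 - 1 / 2) : ℝ) = 1 / 2 := by
      rw [sub_half, sqrt_mul_self one_half_pos.le]
    linarith [cubeD2_nonneg n f, hsqrt]
  -- For `h = 0` the slope at `h` is infinite, so approximate `h` from the right.
  have hcont : Continuous fun q : ℝ =>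
      (2 - 4 * √(q * (1 - q))) * (n * cubeE n fun x => f x ^ 2) := by fun_prop
  refine le_of_tendsto (hcont.continuousWithinAt (s := Ioi h) (x := h)) ?_
  filter_upwards [Ioo_mem_nhdsGT hlt] with q hq
  have hq' : q ∈ Ioo (0 : ℝ) (1 / 2) := ⟨hh.1.trans_lt hq.1, hq.2⟩
  have hmono : binEntropy h ≤ binEntropy q :=
    binEntropy_strictMonoOn.monotoneOn ⟨hh.1, by linarith⟩ ⟨hq'.1.le, by linarith [hq.2]⟩ hq.1.le
  have hent' : (log 2 - binEntropy q) * (n * cubeE n fun x => f x ^ 2) ≤ cubeEnt n f := by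
    refine le_trans ?_ hent
    gcongr
    exact mul_nonneg n.cast_nonneg (cubeE_nonneg fun x => sq_nonneg (f x))
  have hslope := mul_le_mul_of_nonneg_left hent' (sqrtEntropySlope_nonneg hq')
  linarith [cube_log_sobolev f hq']

end HammingCube

/-- **Modified logarithmic Sobolev inequality** on the Hamming cube:
for nonzero `f : {0,1}^n → ℝ` and `ρ = (1/n)·Ent(f²)/E[f²]`,
`E_x ∑_{y∼x} (f x − f y)² ≥ C(ρ)·Ent(f²)`. -/
theorem modified_log_sobolev (n : ℕ) (hn : 1 ≤ n)
    (f : (Fin n → Bool) → ℝ) (hf : f ≠ 0)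
    (Hinv : ℝ → ℝ)
    (hHinv : ∀ y ∈ Set.Icc (0 : ℝ) (Real.log 2),
      Hinv y ∈ Set.Icc (0 : ℝ) (1 / 2) ∧
        -(Hinv y) * Real.log (Hinv y) - (1 - Hinv y) * Real.log (1 - Hinv y) = y) :
    cubeD2 n f ≥
      Cfun Hinv (cubeEnt n f / (n * cubeE n (fun x => f x ^ 2))) * cubeEnt n f := by
  have hN : 0 < n * cubeE n fun x => f x ^ 2 := mul_pos (Nat.cast_pos.2 hn) (cubeE_sq_pos hf)
  have hmem := cubeEnt_div_mem_Icc n f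
  have hEnt := (div_mul_cancel₀ (cubeEnt n f) hN.ne').symm
  generalize cubeEnt n f / _ = ρ at hmem hEnt ⊢
  rw [ge_iff_le, Cfun]
  split_ifs with hρ
  · simpa [hEnt, hρ] using cubeD2_nonneg n f
  obtain ⟨hhalf, hentropy⟩ := hHinv (log 2 - ρ) ⟨sub_nonneg.2 hmem.2, sub_le_self _ hmem.1⟩
  generalize Hinv (log 2 - ρ) = h at hhalf hentropy ⊢
  have hbin : binEntropy h = log 2 - ρ := by
    simp only [binEntropy, log_inv]
    linarith
  calc 4 / ρ * (1 / 2 - √(h * (1 - h))) * cubeEnt n f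
      = (2 - 4 * √(h * (1 - h))) * (n * cubeE n fun x => f x ^ 2) := by
        rw [hEnt]
        field_simp
        ring
    _ ≤ cubeD2 n f := mul_cubeE_le_cubeD2_of_le_cubeEnt hhalf (by rw [hbin, sub_sub_cancel, hEnt])
end

section
/- Let α : [0, log 2] → [0,1] be the inverse of the strictly increasing function t ↦ ψ(t)/(1+t) on [0,1]. Then the function c(t) = 4α(t)/(t·(1 + α(t))) (with c(0) := lim_{t→0} 4α(t)/(t(1+α(t))) = 2) is strictly increasing and convex on [0, log 2], with c(0) = 2 and c(log 2) = 2/log 2 (so c maps [0, log 2] onto [2, 2/log 2]). -/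
/-- `ψ(t) = (1/2)(1−√t)² log((1−√t)²) + (1/2)(1+√t)² log((1+√t)²) − (1+t) log(1+t)`
(note `Real.log 0 = 0`). -/
noncomputable def psi (t : ℝ) : ℝ :=
  (1 / 2) * (1 - Real.sqrt t) ^ 2 * Real.log ((1 - Real.sqrt t) ^ 2) +
    (1 / 2) * (1 + Real.sqrt t) ^ 2 * Real.log ((1 + Real.sqrt t) ^ 2) -
    (1 + t) * Real.log (1 + t)

/-- The function `c(t) = 4α(t)/(t(1+α(t)))` for `t ≠ 0`, with `c(0) = 2`. -/
noncomputable def cOf (α : ℝ → ℝ) (t : ℝ) : ℝ :=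
  if t = 0 then 2 else 4 * α t / (t * (1 + α t))

/-!
Put `u = 2 artanh √t`. Then `ψ(t)/(1+t) = P(u)` with `P(u) = u tanh u - log cosh u`, and
`4t/(1+t) = S(u)` with `S(u) = 2 (1 - sech u)`, so `f(y) = 4α(y)/(1+α(y))` is `S` as a function of
`y = P(u)`. Since `P'(u) = u sech² u`, its derivative is `dS/dP = 2 sinh u / u`, which is increasing
and tends to `2` at `0`; the second derivative `2 cosh² u (u cosh u - sinh u)/u³` is increasing as
well, so `f'` is convex. Finally `c(y) = f(y)/y` is the average of `f'(θ y)` over `θ ∈ [0, 1]`, and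
averaging over `θ` preserves monotonicity and convexity. A monotone convex function is
right-continuous at the left endpoint of its interval, which gives the limit at `0`.
-/

open Real Set Filter Topology

section

open AffineMap

variable {D : Set ℝ} {f g : ℝ → ℝ} {a x θ : ℝ}

lemma lineMap_mem_interior (hD : Convex ℝ D) (ha : a ∈ D) (hx : x ∈ D) (hax : a ≠ x)
    (hθ : θ ∈ Ioo (0 : ℝ) 1) : lineMap a x θ ∈ interior D := by
  rw [lineMap_apply_module]
  exact strictConvex_iff_convex.2 hD ha hx hax (sub_pos.2 hθ.2) hθ.1 (sub_add_cancel 1 θ)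

lemma lineMap_mem_insert_interior (hD : Convex ℝ D) (ha : a ∈ D) (hx : x ∈ D)
    (hθ : θ ∈ Ioo (0 : ℝ) 1) : lineMap a x θ ∈ insert a (interior D) := by
  rcases eq_or_ne a x with rfl | hax
  · simp
  · exact Or.inr (lineMap_mem_interior hD ha hx hax hθ)

-- `k` is a primitive of `θ ↦ g (lineMap a x θ)`, standing in for the integral of that function over
-- `[0, 1]`: no integrability of `g` at the endpoints of `D` is required.
lemma exists_hasDerivAt_update_slope (hD : Convex ℝ D) (ha : a ∈ D) (hx : x ∈ D)
    (hf : ContinuousOn f D) (hfg : ∀ y ∈ interior D, HasDerivAt f (g y) y) :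
    ∃ k : ℝ → ℝ, ContinuousOn k (Icc 0 1) ∧
      (∀ θ ∈ Ioo (0 : ℝ) 1, HasDerivAt k (g (lineMap a x θ)) θ) ∧
      k 1 - k 0 = Function.update (slope f a) a (g a) x := by
  rcases eq_or_ne a x with rfl | hax
  · refine ⟨fun θ => θ * g a, by fun_prop, fun θ _ => ?_, by simp⟩
    simpa using (hasDerivAt_id θ).mul_const (g a)
  · refine ⟨fun θ => f (lineMap a x θ) / (x - a), ?_, fun θ hθ => ?_, ?_⟩
    · exact (hf.comp lineMap_continuous.continuousOn
        fun θ hθ => hD.lineMap_mem ha hx hθ).div_const _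
    · exact (((hfg _ (lineMap_mem_interior hD ha hx hax hθ)).comp θ hasDerivAt_lineMap).div_const
        (x - a)).congr_deriv (mul_div_cancel_right₀ _ (sub_ne_zero.2 hax.symm))
    · simp [Function.update_of_ne hax.symm, slope_def_field, sub_div]

theorem strictMonoOn_update_slope (hD : Convex ℝ D) (ha : a ∈ D) (hf : ContinuousOn f D)
    (hfg : ∀ y ∈ interior D, HasDerivAt f (g y) y)
    (hg : StrictMonoOn g (insert a (interior D))) :
    StrictMonoOn (Function.update (slope f a) a (g a)) D := by
  intro x hx y hy hxy
  obtain ⟨k, hk, hk', hkx⟩ := exists_hasDerivAt_update_slope hD ha hx hf hfg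
  obtain ⟨l, hl, hl', hly⟩ := exists_hasDerivAt_update_slope hD ha hy hf hfg
  have hmono : StrictMonoOn (l - k) (Icc 0 1) := by
    refine strictMonoOn_of_hasDerivWithinAt_pos (convex_Icc 0 1) (hl.sub hk)
      (f' := fun θ => g (lineMap a y θ) - g (lineMap a x θ)) (fun θ hθ => ?_) fun θ hθ => ?_
      <;> rw [interior_Icc] at hθ
    · exact ((hl' θ hθ).sub (hk' θ hθ)).hasDerivWithinAt
    · exact sub_pos.2 <| hg (lineMap_mem_insert_interior hD ha hx hθ)
        (lineMap_mem_insert_interior hD ha hy hθ) (lineMap_strict_mono_right hxy hθ.1)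
  have := hmono (left_mem_Icc.2 zero_le_one) (right_mem_Icc.2 zero_le_one) zero_lt_one
  simp only [Pi.sub_apply] at this
  linarith

theorem convexOn_update_slope (hD : Convex ℝ D) (ha : a ∈ D) (hf : ContinuousOn f D)
    (hfg : ∀ y ∈ interior D, HasDerivAt f (g y) y)
    (hg : ConvexOn ℝ (insert a (interior D)) g) :
    ConvexOn ℝ D (Function.update (slope f a) a (g a)) := by
  refine ⟨hD, fun x hx y hy p q hp hq hpq => ?_⟩
  obtain ⟨k, hk, hk', hkx⟩ := exists_hasDerivAt_update_slope hD ha hx hf hfg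
  obtain ⟨l, hl, hl', hly⟩ := exists_hasDerivAt_update_slope hD ha hy hf hfg
  obtain ⟨m, hm, hm', hmz⟩ :=
    exists_hasDerivAt_update_slope hD ha (hD hx hy hp hq hpq) hf hfg
  have hmono : MonotoneOn (p • k + q • l - m) (Icc 0 1) := by
    refine monotoneOn_of_hasDerivWithinAt_nonneg (convex_Icc 0 1)
      (f' := fun θ => p • g (lineMap a x θ) + q • g (lineMap a y θ) -
        g (lineMap a (p • x + q • y) θ))
      (((hk.const_smul p).add (hl.const_smul q)).sub hm) (fun θ hθ => ?_) fun θ hθ => ?_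
      <;> rw [interior_Icc] at hθ
    · exact ((((hk' θ hθ).const_smul p).add ((hl' θ hθ).const_smul q)).sub
        (hm' θ hθ)).hasDerivWithinAt
    · have hline : lineMap a (p • x + q • y) θ = p • lineMap a x θ + q • lineMap a y θ := by
        simp only [lineMap_apply_module, smul_eq_mul]
        linear_combination (θ - 1) * a * hpq
      rw [sub_nonneg, hline]
      exact hg.2 (lineMap_mem_insert_interior hD ha hx hθ)
        (lineMap_mem_insert_interior hD ha hy hθ) hp hq hpq
  have := hmono (left_mem_Icc.2 zero_le_one) (right_mem_Icc.2 zero_le_one) zero_le_one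
  simp only [Pi.sub_apply, Pi.add_apply, Pi.smul_apply, smul_eq_mul] at this
  rw [← hkx, ← hly, ← hmz]
  simp only [smul_eq_mul]
  linarith

end

lemma tendsto_nhdsGT_of_monotoneOn_of_convexOn {f : ℝ → ℝ} {a b : ℝ} (hab : a < b)
    (hmono : MonotoneOn f (Icc a b)) (hconv : ConvexOn ℝ (Icc a b) f) :
    Tendsto f (𝓝[>] a) (𝓝 (f a)) := by
  have ha : a ∈ Icc a b := left_mem_Icc.2 hab.le
  have hb : b ∈ Icc a b := right_mem_Icc.2 hab.le
  have hIoo : Ioo a b ∈ 𝓝[>] a := Ioo_mem_nhdsGT hab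
  have hsecant : Tendsto (fun x => slope f a b * (x - a) + f a) (𝓝[>] a) (𝓝 (f a)) := by
    refine Tendsto.mono_left ?_ nhdsWithin_le_nhds
    exact Continuous.tendsto' (by fun_prop) _ _ (by simp)
  refine tendsto_of_tendsto_of_tendsto_of_le_of_le' tendsto_const_nhds hsecant ?_ ?_
  · filter_upwards [hIoo] with x hx
    exact hmono ha (Ioo_subset_Icc_self hx) hx.1.le
  · filter_upwards [hIoo] with x hx
    have := hconv.slope_mono ha ⟨Ioo_subset_Icc_self hx, hx.1.ne'⟩ ⟨hb, hab.ne'⟩ hx.2.le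
    rw [slope_def_field f a x, div_le_iff₀ (sub_pos.2 hx.1)] at this
    linarith

lemma continuousOn_of_invOn {X Y : Type*} [TopologicalSpace X] [TopologicalSpace Y] [T2Space Y]
    {f : X → Y} {g : Y → X} {K : Set X} {s : Set Y} (hK : IsCompact K) (hf : ContinuousOn f K)
    (hg : MapsTo g s K) (hinv : InvOn g f K s) : ContinuousOn g s := by
  refine continuousOn_iff_isClosed.2 fun t ht => ⟨f '' (K ∩ t), ?_, ?_⟩
  · exact ((hK.inter_right ht).image_of_continuousOn (hf.mono inter_subset_left)).isClosed
  · ext y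
    refine and_congr_left fun hy => ⟨fun hyt => ⟨g y, ⟨hg hy, hyt⟩, hinv.2 hy⟩, ?_⟩
    rintro ⟨x, ⟨hxK, hxt⟩, rfl⟩
    rwa [mem_preimage, hinv.1 hxK]

lemma hasDerivAt_comp_of_local_left_inverse {𝕜 : Type*} [NontriviallyNormedField 𝕜]
    {F p u : 𝕜 → 𝕜} {p' r y : 𝕜} (hu : ContinuousAt u y) (hp : HasDerivAt p p' (u y))
    (hp' : p' ≠ 0) (hF : HasDerivAt F (p' * r) (u y)) (hinv : ∀ᶠ x in 𝓝 y, p (u x) = x) :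
    HasDerivAt (F ∘ u) r y :=
  (hF.comp y (hp.of_local_left_inverse hu hp' hinv)).congr_deriv (by field_simp)

/-- The hyperbolic sine quotient `sinh u / u`, with the value `1` at `0`; twice it is the derivative
of `2 (1 - sech u)` with respect to `legendreLogCosh u`. -/
noncomputable def sinhc : ℝ → ℝ := dslope sinh 0

lemma sinhc_zero : sinhc 0 = 1 := by simp [sinhc]

lemma sinhc_of_ne_zero {u : ℝ} (hu : u ≠ 0) : sinhc u = sinh u / u := by
  simp [sinhc, dslope_of_ne _ hu, slope_def_field]

lemma continuous_sinhc : Continuous sinhc := by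
  rw [← continuousOn_univ, sinhc, continuousOn_dslope univ_mem]
  exact ⟨continuous_sinh.continuousOn, differentiable_sinh 0⟩

lemma hasDerivAt_sinhc {u : ℝ} (hu : u ≠ 0) :
    HasDerivAt sinhc ((u * cosh u - sinh u) / u ^ 2) u := by
  refine (((hasDerivAt_sinh u).div (hasDerivAt_id u) hu).congr_deriv ?_).congr_of_eventuallyEq
    ((eventually_ne_nhds hu).mono fun x hx => sinhc_of_ne_zero hx)
  simp [mul_comm]

lemma strictMonoOn_sinhc : StrictMonoOn sinhc (Ici 0) := by
  have h := strictMonoOn_update_slope (f := sinh) (g := cosh) (convex_Ici 0) self_mem_Ici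
    continuous_sinh.continuousOn (fun y _ => hasDerivAt_sinh y)
    (by simpa using cosh_strictMonoOn)
  rwa [← Real.deriv_sinh] at h

lemma hasDerivAt_mul_cosh_sub_sinh (u : ℝ) :
    HasDerivAt (fun x => x * cosh x - sinh x) (u * sinh u) u :=
  (((hasDerivAt_id u).mul (hasDerivAt_cosh u)).sub (hasDerivAt_sinh u)).congr_deriv
    (by simp)

lemma sinh_le_mul_cosh {u : ℝ} (hu : 0 ≤ u) : sinh u ≤ u * cosh u := by
  have hmono : MonotoneOn (fun x => x * cosh x - sinh x) (Ici 0) :=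
    monotoneOn_of_hasDerivWithinAt_nonneg (convex_Ici 0) (by fun_prop)
      (fun x _ => (hasDerivAt_mul_cosh_sub_sinh x).hasDerivWithinAt) fun x hx => by
        rw [interior_Ici] at hx
        exact mul_nonneg hx.le (sinh_nonneg_iff.2 hx.le)
  simpa using hmono self_mem_Ici hu hu

lemma three_mul_mul_cosh_sub_sinh_le {u : ℝ} (hu : 0 ≤ u) :
    3 * (u * cosh u - sinh u) ≤ u ^ 2 * sinh u := by
  have hderiv (x : ℝ) : HasDerivAt
      (fun x => x ^ 2 * sinh x - 3 * (x * cosh x - sinh x))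
      (x * (x * cosh x - sinh x)) x := by
    refine (((hasDerivAt_pow 2 x).mul (hasDerivAt_sinh x)).sub
      ((hasDerivAt_mul_cosh_sub_sinh x).const_mul 3)).congr_deriv ?_
    norm_num
    ring
  have hmono : MonotoneOn
      (fun x => x ^ 2 * sinh x - 3 * (x * cosh x - sinh x)) (Ici 0) :=
    monotoneOn_of_hasDerivWithinAt_nonneg (convex_Ici 0) (by fun_prop)
      (fun x _ => (hderiv x).hasDerivWithinAt) fun x hx => by
        rw [interior_Ici] at hx
        exact mul_nonneg hx.le (sub_nonneg.2 (sinh_le_mul_cosh hx.le))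
  simpa using hmono self_mem_Ici hu hu

lemma monotoneOn_mul_cosh_sub_sinh_div_cube :
    MonotoneOn (fun u => (u * cosh u - sinh u) / u ^ 3) (Ioi 0) := by
  have hderiv (x : ℝ) (hx : 0 < x) : HasDerivAt
      (fun u => (u * cosh u - sinh u) / u ^ 3)
      ((x ^ 2 * sinh x - 3 * (x * cosh x - sinh x)) / x ^ 4) x := by
    refine ((hasDerivAt_mul_cosh_sub_sinh x).div (hasDerivAt_pow 3 x)
      (by positivity)).congr_deriv ?_
    norm_num
    field_simp
  refine monotoneOn_of_hasDerivWithinAt_nonneg (convex_Ioi 0)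
    (fun x hx => (hderiv x hx).continuousAt.continuousWithinAt)
    (fun x hx => (hderiv x (interior_subset hx)).hasDerivWithinAt) fun x hx => ?_
  have hx : 0 < x := interior_subset hx
  exact div_nonneg (sub_nonneg.2 (three_mul_mul_cosh_sub_sinh_le hx.le)) (by positivity)

lemma monotoneOn_cosh_sq_mul_mul_cosh_sub_sinh_div_cube :
    MonotoneOn (fun u => cosh u ^ 2 * ((u * cosh u - sinh u) / u ^ 3)) (Ioi 0) := by
  refine MonotoneOn.mul ?_ monotoneOn_mul_cosh_sub_sinh_div_cube ?_ ?_
  · exact fun x hx y hy hxy => pow_le_pow_left₀ (cosh_pos x).le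
      (cosh_strictMonoOn.monotoneOn (mem_Ici_of_Ioi hx) (mem_Ici_of_Ioi hy) hxy) 2
  · exact fun x _ => sq_nonneg _
  · exact fun x (hx : 0 < x) => div_nonneg (sub_nonneg.2 (sinh_le_mul_cosh hx.le)) (by positivity)

lemma hasDerivAt_tanh (u : ℝ) : HasDerivAt tanh (1 / cosh u ^ 2) u := by
  rw [funext tanh_eq_sinh_div_cosh]
  refine ((hasDerivAt_sinh u).div (hasDerivAt_cosh u) (cosh_pos u).ne').congr_deriv ?_
  rw [← sq, ← sq, cosh_sq_sub_sinh_sq]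

/-- The Legendre transform of `log ∘ cosh` at the slope `tanh u`; it equals `ψ(t)/(1+t)` for
`u = twoArtanhSqrt t`. -/
noncomputable def legendreLogCosh (u : ℝ) : ℝ :=
  u * tanh u - log (cosh u)

lemma hasDerivAt_legendreLogCosh (u : ℝ) :
    HasDerivAt legendreLogCosh (u / cosh u ^ 2) u := by
  have hc : cosh u ≠ 0 := (cosh_pos u).ne'
  refine (((hasDerivAt_id u).mul (hasDerivAt_tanh u)).sub
    ((hasDerivAt_cosh u).log hc)).congr_deriv ?_
  rw [id, tanh_eq_sinh_div_cosh]
  ring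

lemma strictMonoOn_legendreLogCosh : StrictMonoOn legendreLogCosh (Ici 0) := by
  refine strictMonoOn_of_hasDerivWithinAt_pos (convex_Ici 0)
    (fun x _ => (hasDerivAt_legendreLogCosh x).continuousAt.continuousWithinAt)
    (fun x _ => (hasDerivAt_legendreLogCosh x).hasDerivWithinAt) fun x hx => ?_
  rw [interior_Ici] at hx
  exact div_pos hx (pow_pos (cosh_pos x) 2)

lemma hasDerivAt_two_mul_one_sub_inv_cosh {u : ℝ} (hu : u ≠ 0) :
    HasDerivAt (fun x => 2 * (1 - (cosh x)⁻¹)) (u / cosh u ^ 2 * (2 * sinhc u)) u := by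
  have hc : cosh u ≠ 0 := (cosh_pos u).ne'
  refine ((((hasDerivAt_cosh u).inv hc).const_sub 1).const_mul 2).congr_deriv ?_
  rw [sinhc_of_ne_zero hu]
  field_simp

section

variable {u : ℝ → ℝ} {b y : ℝ}

lemma strictMonoOn_of_leftInvOn_legendreLogCosh {s : Set ℝ} (hu : MapsTo u s (Ici 0))
    (hinv : LeftInvOn legendreLogCosh u s) : StrictMonoOn u s := fun x hx y hy hxy =>
  (strictMonoOn_legendreLogCosh.lt_iff_lt (hu hx) (hu hy)).1 (by rwa [hinv hx, hinv hy])

lemma pos_of_leftInvOn_legendreLogCosh (hu : MapsTo u (Ico 0 b) (Ici 0))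
    (hinv : LeftInvOn legendreLogCosh u (Ico 0 b)) (hy : y ∈ Ioo 0 b) : 0 < u y :=
  (hu ⟨le_rfl, hy.1.trans hy.2⟩).trans_lt <| strictMonoOn_of_leftInvOn_legendreLogCosh hu hinv
    ⟨le_rfl, hy.1.trans hy.2⟩ (Ioo_subset_Ico_self hy) hy.1

lemma hasDerivAt_comp_of_leftInvOn_legendreLogCosh {F : ℝ → ℝ} {r : ℝ}
    (hu : MapsTo u (Ico 0 b) (Ici 0))
    (hinv : LeftInvOn legendreLogCosh u (Ico 0 b)) (hcont : ContinuousOn u (Ico 0 b))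
    (hy : y ∈ Ioo 0 b) (hF : HasDerivAt F (u y / cosh (u y) ^ 2 * r) (u y)) :
    HasDerivAt (F ∘ u) r y := by
  have hpos := pos_of_leftInvOn_legendreLogCosh hu hinv hy
  have hmem : Ico 0 b ∈ 𝓝 y := Ico_mem_nhds hy.1 hy.2
  exact hasDerivAt_comp_of_local_left_inverse (hcont.continuousAt hmem)
    (hasDerivAt_legendreLogCosh _) (div_pos hpos (pow_pos (cosh_pos _) 2)).ne' hF
    (eventually_of_mem hmem hinv)

lemma convexOn_sinhc_comp (hu : MapsTo u (Ico 0 b) (Ici 0))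
    (hinv : LeftInvOn legendreLogCosh u (Ico 0 b)) (hcont : ContinuousOn u (Ico 0 b)) :
    ConvexOn ℝ (Ico 0 b) (sinhc ∘ u) := by
  have hderiv (y) (hy : y ∈ Ioo 0 b) : HasDerivAt (sinhc ∘ u) (cosh (u y) ^ 2 *
      ((u y * cosh (u y) - sinh (u y)) / u y ^ 3)) y := by
    have hpos := pos_of_leftInvOn_legendreLogCosh hu hinv hy
    have := cosh_pos (u y)
    exact hasDerivAt_comp_of_leftInvOn_legendreLogCosh hu hinv hcont hy
      ((hasDerivAt_sinhc hpos.ne').congr_deriv (by field_simp))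
  refine MonotoneOn.convexOn_of_deriv (convex_Ico 0 b) (continuous_sinhc.comp_continuousOn hcont)
    ?_ ?_ <;> rw [interior_Ico]
  · exact fun y hy => (hderiv y hy).differentiableAt.differentiableWithinAt
  · refine MonotoneOn.congr ?_ fun y hy => (hderiv y hy).deriv.symm
    have hmono : MonotoneOn u (Ioo 0 b) :=
      (strictMonoOn_of_leftInvOn_legendreLogCosh hu hinv).monotoneOn.mono Ioo_subset_Ico_self
    exact monotoneOn_cosh_sq_mul_mul_cosh_sub_sinh_div_cube.comp hmono
      fun y hy => pos_of_leftInvOn_legendreLogCosh hu hinv hy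

end

lemma continuousOn_artanh : ContinuousOn artanh (Ioo (-1) 1) := by
  intro s hs
  have h : 0 < (1 + s) / (1 - s) := div_pos (by linarith [hs.1]) (by linarith [hs.2])
  have h' : 1 - s ≠ 0 := by linarith [hs.2]
  unfold artanh
  refine ContinuousAt.continuousWithinAt ?_
  refine ContinuousAt.log ?_ (sqrt_pos.2 h).ne'
  fun_prop (disch := assumption)

/-- The parameter `u ≥ 0` with `t = tanh (u / 2) ^ 2`, for `0 ≤ t < 1`; in it `ψ(t)/(1+t)` and
`4t/(1+t)` become hyperbolic functions. -/
noncomputable def twoArtanhSqrt (t : ℝ) : ℝ := 2 * artanh √t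

lemma sqrt_mem_Ioo {t : ℝ} (ht : t ∈ Ico 0 1) : √t ∈ Ioo (-1) 1 :=
  ⟨neg_one_lt_zero.trans_le (sqrt_nonneg t), by simpa using sqrt_lt_sqrt ht.1 ht.2⟩

lemma twoArtanhSqrt_zero : twoArtanhSqrt 0 = 0 := by simp [twoArtanhSqrt]

lemma twoArtanhSqrt_nonneg (t : ℝ) : 0 ≤ twoArtanhSqrt t :=
  mul_nonneg zero_le_two (artanh_nonneg (sqrt_nonneg t))

lemma mapsTo_twoArtanhSqrt_comp {α : ℝ → ℝ} {s : Set ℝ} :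
    MapsTo (twoArtanhSqrt ∘ α) s (Ici 0) :=
  fun _ _ => twoArtanhSqrt_nonneg _

lemma continuousOn_twoArtanhSqrt : ContinuousOn twoArtanhSqrt (Ico 0 1) :=
  (continuousOn_artanh.comp continuous_sqrt.continuousOn fun _ => sqrt_mem_Ioo).const_mul 2

lemma cosh_twoArtanhSqrt {t : ℝ} (ht : t ∈ Ico 0 1) :
    cosh (twoArtanhSqrt t) = (1 + t) / (1 - t) := by
  rw [twoArtanhSqrt, cosh_two_mul, cosh_artanh (sqrt_mem_Ioo ht),
    sinh_artanh (sqrt_mem_Ioo ht), div_pow, div_pow, sq_sqrt ht.1,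
    sq_sqrt (sub_nonneg.2 ht.2.le)]
  ring

lemma sinh_twoArtanhSqrt {t : ℝ} (ht : t ∈ Ico 0 1) :
    sinh (twoArtanhSqrt t) = 2 * √t / (1 - t) := by
  rw [twoArtanhSqrt, sinh_two_mul, cosh_artanh (sqrt_mem_Ioo ht),
    sinh_artanh (sqrt_mem_Ioo ht), sq_sqrt ht.1, mul_assoc, div_mul_div_comm,
    mul_self_sqrt (sub_nonneg.2 ht.2.le)]
  ring

lemma legendreLogCosh_twoArtanhSqrt {t : ℝ} (ht : t ∈ Ico 0 1) :
    legendreLogCosh (twoArtanhSqrt t) = psi t / (1 + t) := by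
  have hs := sqrt_mem_Ioo ht
  have hp : 1 + √t ≠ 0 := by linarith [hs.1]
  have hm : 1 - √t ≠ 0 := (sub_pos.2 hs.2).ne'
  have ht' : 1 + t ≠ 0 := by linarith [ht.1]
  have hq : 1 - t ≠ 0 := (sub_pos.2 ht.2).ne'
  have hlog : log (1 - t) = log (1 + √t) + log (1 - √t) := by
    rw [← log_mul hp hm, ← sq_sub_sq, one_pow, sq_sqrt ht.1]
  rw [psi, legendreLogCosh, tanh_eq_sinh_div_cosh, cosh_twoArtanhSqrt ht,
    sinh_twoArtanhSqrt ht, twoArtanhSqrt, artanh_eq_half_log (Ioo_subset_Icc_self hs),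
    log_div ht' hq, log_div hp hm, log_pow, log_pow, hlog]
  push_cast
  field_simp
  linear_combination (-log (1 + √t) - log (1 - √t)) * sq_sqrt ht.1

lemma two_mul_one_sub_inv_cosh_twoArtanhSqrt {t : ℝ} (ht : t ∈ Ico 0 1) :
    2 * (1 - (cosh (twoArtanhSqrt t))⁻¹) = 4 * t / (1 + t) := by
  have h0 : 1 + t ≠ 0 := by linarith [ht.1]
  rw [cosh_twoArtanhSqrt ht, inv_div]
  field_simp
  ring

lemma psi_zero : psi 0 = 0 := by simp [psi]

lemma psi_one : psi 1 = 2 * log 2 := by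
  norm_num [psi, show log 4 = 2 * log 2 by rw [← log_rpow two_pos]; norm_num]
  ring

lemma continuous_psi : Continuous psi := by
  have h {f : ℝ → ℝ} (hf : Continuous f) : Continuous fun t => f t * log (f t) :=
    continuous_mul_log.comp hf
  unfold psi
  simp only [mul_assoc]
  exact (((h (by fun_prop)).const_mul _).add ((h (by fun_prop)).const_mul _)).sub
    (h (by fun_prop))

/-- `α` restricts to an inverse `[0, log 2] → [0, 1]` of `t ↦ ψ(t)/(1+t)`; its values outside
`[0, log 2]` are arbitrary. -/
structure IsPsiDivInverse (α : ℝ → ℝ) : Prop where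
  mapsTo : MapsTo α (Icc 0 (log 2)) (Icc 0 1)
  invOn : InvOn α (fun t => psi t / (1 + t)) (Icc 0 1) (Icc 0 (log 2))

namespace IsPsiDivInverse

variable {α : ℝ → ℝ} {y : ℝ}

lemma apply_zero (h : IsPsiDivInverse α) : α 0 = 0 := by
  simpa [psi_zero] using h.invOn.1 (left_mem_Icc.2 zero_le_one)

lemma apply_log_two (h : IsPsiDivInverse α) : α (log 2) = 1 := by
  simpa [psi_one, one_add_one_eq_two] using h.invOn.1 (right_mem_Icc.2 zero_le_one)

lemma psi_div_one_add_apply (h : IsPsiDivInverse α) (hy : y ∈ Icc 0 (log 2)) :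
    psi (α y) / (1 + α y) = y :=
  h.invOn.2 hy

lemma continuousOn (h : IsPsiDivInverse α) : ContinuousOn α (Icc 0 (log 2)) :=
  continuousOn_of_invOn isCompact_Icc
    (continuous_psi.continuousOn.div (by fun_prop) fun t ht => by linarith [ht.1]) h.mapsTo h.invOn

lemma mapsTo_Ico (h : IsPsiDivInverse α) : MapsTo α (Ico 0 (log 2)) (Ico 0 1) := by
  intro y hy
  have hαy := h.mapsTo (Ico_subset_Icc_self hy)
  refine ⟨hαy.1, hαy.2.lt_of_ne fun hone => hy.2.ne ?_⟩
  rw [← h.psi_div_one_add_apply (Ico_subset_Icc_self hy), hone, psi_one]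
  ring

lemma leftInvOn_legendreLogCosh (h : IsPsiDivInverse α) :
    LeftInvOn legendreLogCosh (twoArtanhSqrt ∘ α) (Ico 0 (log 2)) := fun _ hy =>
  (legendreLogCosh_twoArtanhSqrt (h.mapsTo_Ico hy)).trans
    (h.psi_div_one_add_apply (Ico_subset_Icc_self hy))

lemma continuousOn_twoArtanhSqrt_comp (h : IsPsiDivInverse α) :
    ContinuousOn (twoArtanhSqrt ∘ α) (Ico 0 (log 2)) :=
  continuousOn_twoArtanhSqrt.comp (h.continuousOn.mono Ico_subset_Icc_self) h.mapsTo_Ico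

lemma continuousOn_four_mul_div (h : IsPsiDivInverse α) :
    ContinuousOn (fun y => 4 * α y / (1 + α y)) (Icc 0 (log 2)) :=
  (h.continuousOn.const_mul 4).div (h.continuousOn.const_add 1)
    fun y hy => by linarith [(h.mapsTo hy).1]

lemma hasDerivAt_four_mul_div (h : IsPsiDivInverse α) (hy : y ∈ Ioo 0 (log 2)) :
    HasDerivAt (fun y => 4 * α y / (1 + α y)) (2 * sinhc (twoArtanhSqrt (α y))) y := by
  have hpos := pos_of_leftInvOn_legendreLogCosh mapsTo_twoArtanhSqrt_comp
    h.leftInvOn_legendreLogCosh hy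
  refine (hasDerivAt_comp_of_leftInvOn_legendreLogCosh mapsTo_twoArtanhSqrt_comp
    h.leftInvOn_legendreLogCosh h.continuousOn_twoArtanhSqrt_comp hy
    (hasDerivAt_two_mul_one_sub_inv_cosh hpos.ne')).congr_of_eventuallyEq ?_
  filter_upwards [Ico_mem_nhds hy.1 hy.2] with x hx
  exact (two_mul_one_sub_inv_cosh_twoArtanhSqrt (h.mapsTo_Ico hx)).symm

lemma cOf_eq_update_slope (h : IsPsiDivInverse α) :
    cOf α = Function.update (slope (fun y => 4 * α y / (1 + α y)) 0) 0
      (2 * sinhc (twoArtanhSqrt (α 0))) := by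
  ext y
  rcases eq_or_ne y 0 with rfl | hy
  · simp [cOf, h.apply_zero, twoArtanhSqrt_zero, sinhc_zero]
  · simp [cOf, hy, slope_def_field, h.apply_zero, div_div, mul_comm]

theorem strictMonoOn_cOf (h : IsPsiDivInverse α) : StrictMonoOn (cOf α) (Icc 0 (log 2)) := by
  have hlog : 0 < log 2 := log_pos one_lt_two
  rw [h.cOf_eq_update_slope]
  refine strictMonoOn_update_slope (g := fun y => 2 * sinhc (twoArtanhSqrt (α y)))
    (convex_Icc 0 _) (left_mem_Icc.2 hlog.le) h.continuousOn_four_mul_div ?_ ?_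
    <;> rw [interior_Icc]
  · exact fun _ => h.hasDerivAt_four_mul_div
  · rw [Ioo_insert_left hlog]
    have hmono := strictMonoOn_of_leftInvOn_legendreLogCosh mapsTo_twoArtanhSqrt_comp
      h.leftInvOn_legendreLogCosh
    exact (strictMono_mul_left_of_pos two_pos).comp_strictMonoOn <|
      strictMonoOn_sinhc.comp hmono mapsTo_twoArtanhSqrt_comp

theorem convexOn_cOf (h : IsPsiDivInverse α) : ConvexOn ℝ (Icc 0 (log 2)) (cOf α) := by
  have hlog : 0 < log 2 := log_pos one_lt_two
  rw [h.cOf_eq_update_slope]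
  refine convexOn_update_slope (g := fun y => 2 * sinhc (twoArtanhSqrt (α y)))
    (convex_Icc 0 _) (left_mem_Icc.2 hlog.le) h.continuousOn_four_mul_div ?_ ?_
    <;> rw [interior_Icc]
  · exact fun _ => h.hasDerivAt_four_mul_div
  · rw [Ioo_insert_left hlog]
    exact (convexOn_sinhc_comp mapsTo_twoArtanhSqrt_comp h.leftInvOn_legendreLogCosh
      h.continuousOn_twoArtanhSqrt_comp).smul zero_le_two

lemma cOf_log_two (h : IsPsiDivInverse α) : cOf α (log 2) = 2 / log 2 := by
  have hlog : log 2 ≠ 0 := (log_pos one_lt_two).ne'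
  rw [cOf, if_neg hlog, h.apply_log_two]
  field_simp
  norm_num

end IsPsiDivInverse

/-- Let `α : [0, log 2] → [0,1]` be the inverse of `t ↦ ψ(t)/(1+t)`. Then
`c(t) = 4α(t)/(t(1+α(t)))` (with `c(0) = lim_{t→0⁺} 4α(t)/(t(1+α(t))) = 2`) is
strictly increasing and convex on `[0, log 2]`, with `c(0) = 2` and
`c(log 2) = 2/log 2`. -/
theorem cOf_strictMono_convex (α : ℝ → ℝ)
    (hαmem : ∀ y ∈ Set.Icc (0 : ℝ) (Real.log 2), α y ∈ Set.Icc (0 : ℝ) 1)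
    (hαright : ∀ y ∈ Set.Icc (0 : ℝ) (Real.log 2), psi (α y) / (1 + α y) = y)
    (hαleft : ∀ t ∈ Set.Icc (0 : ℝ) 1, α (psi t / (1 + t)) = t) :
    StrictMonoOn (cOf α) (Set.Icc 0 (Real.log 2)) ∧
      ConvexOn ℝ (Set.Icc 0 (Real.log 2)) (cOf α) ∧
      Filter.Tendsto (fun t => 4 * α t / (t * (1 + α t)))
        (nhdsWithin 0 (Set.Ioi 0)) (nhds 2) ∧
      cOf α 0 = 2 ∧ cOf α (Real.log 2) = 2 / Real.log 2 := by
  have hα : IsPsiDivInverse α := ⟨hαmem, hαleft, hαright⟩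
  have hmono := hα.strictMonoOn_cOf
  have hconv := hα.convexOn_cOf
  have hzero : cOf α 0 = 2 := if_pos rfl
  refine ⟨hmono, hconv, ?_, hzero, hα.cOf_log_two⟩
  rw [← hzero]
  refine (tendsto_nhdsGT_of_monotoneOn_of_convexOn (log_pos one_lt_two) hmono.monotoneOn
    hconv).congr' ?_
  filter_upwards [self_mem_nhdsWithin] with t ht using if_neg (ne_of_gt ht)
end

section
/- Let ξ(t) = ψ(t)/(1+t), where ψ(t) = (1/2)(1−√t)² log((1−√t)²) + (1/2)(1+√t)² log((1+√t)²) − (1+t) log(1+t). Then for every t ∈ (0,1), −ξ''(t) > 2·ξ'(t), where ξ' and ξ'' denote the first and second derivatives of ξ. -/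
/-- `ξ(t) = ψ(t)/(1+t)`. -/
noncomputable def xi (t : ℝ) : ℝ := psi t / (1 + t)

/-!
Normalising the two squares `(1 ± √t)²`, which sum to `2 (1 + t)`, to a probability vector
`(p, 1 - p)` turns `ξ(t)` into `log 2 - H(p)`, with `H` the binary entropy. With
`L = H'(p) = log (1 - p) - log p` and `H''(p) = -1 / (p (1 - p))`, the chain rule gives
`ξ' = -p' L` and `ξ'' = p'² / (p (1 - p)) - p'' L`, so that `-ξ'' - 2 ξ'` has the sign of
`(1 + 2t - 3t² + 4t³) L - 4 √t (1 + t)`. Since `(1 - p) / p = ((1 + √t) / (1 - √t))²`, the first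
term of the series of `log ((1 + s) / (1 - s))` yields `L ≥ 4 √t` for `t < 1`, and the symmetry of
`p` under `t ↦ 1 / t` yields `L ≥ 4 / √t` for `t > 1`. Both bounds suffice because the cubic
exceeds `1 + t` as well as `t (1 + t)`.
-/

open Real

variable {p t : ℝ}

/-- The log-odds against an event of probability `p`; this is the derivative of `binEntropy`, named
so that it can be differentiated once more. -/
noncomputable def logOdds (p : ℝ) : ℝ := log (1 - p) - log p

theorem hasDerivAt_logOdds (hp₀ : p ≠ 0) (hp₁ : p ≠ 1) :
    HasDerivAt logOdds (-(p * (1 - p))⁻¹) p := by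
  have hq : 1 - p ≠ 0 := sub_ne_zero.2 hp₁.symm
  refine ((((hasDerivAt_id' p).const_sub 1).log hq).sub (hasDerivAt_log hp₀)).congr_deriv ?_
  field

/-- The share of the smaller square in `(1 - √t)² + (1 + √t)² = 2 (1 + t)`, where `0 ≤ t`:
the probability whose binary entropy is `log 2 - ξ(t)`. -/
noncomputable def minorWeight (t : ℝ) : ℝ := (1 - √t) ^ 2 / (2 * (1 + t))

theorem one_sub_minorWeight (ht : 0 ≤ t) : 1 - minorWeight t = (1 + √t) ^ 2 / (2 * (1 + t)) := by
  rw [minorWeight, eq_div_iff (by positivity), sub_mul, div_mul_cancel₀ _ (by positivity)]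
  linear_combination -2 * sq_sqrt ht

theorem minorWeight_mul_one_sub (ht : 0 ≤ t) :
    minorWeight t * (1 - minorWeight t) = ((1 - t) / (2 * (1 + t))) ^ 2 := by
  have hfactor : (1 - √t) * (1 + √t) = 1 - t := by linear_combination -sq_sqrt ht
  rw [one_sub_minorWeight ht, minorWeight, ← hfactor]
  ring

theorem minorWeight_ne_zero (ht : 0 ≤ t) (ht₁ : t ≠ 1) : minorWeight t ≠ 0 := by
  have hs : 1 - √t ≠ 0 := sub_ne_zero.2 (Ne.symm (sqrt_eq_one.not.2 ht₁))
  unfold minorWeight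
  positivity

theorem minorWeight_lt_one (ht : 0 ≤ t) : minorWeight t < 1 := by
  rw [← sub_pos, one_sub_minorWeight ht]
  positivity

theorem minorWeight_inv (ht : 0 < t) : minorWeight t⁻¹ = minorWeight t := by
  have hs : √t ≠ 0 := (sqrt_pos.2 ht).ne'
  rw [minorWeight, minorWeight, sqrt_inv]
  field_simp
  rw [sq_sqrt ht.le]
  ring

theorem xi_eq_log_two_sub_binEntropy (ht : 0 ≤ t) :
    xi t = log 2 - binEntropy (minorWeight t) := by
  have hminor : (1 - √t) ^ 2 = 2 * (1 + t) * minorWeight t := by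
    rw [minorWeight]
    field
  have hmajor : (1 + √t) ^ 2 = 2 * (1 + t) * (1 - minorWeight t) := by
    rw [one_sub_minorWeight ht]
    field
  have hpsi : psi t = -(negMulLog ((1 - √t) ^ 2) + negMulLog ((1 + √t) ^ 2)) / 2 -
      (1 + t) * log (1 + t) := by
    rw [psi, negMulLog, negMulLog]
    ring
  have hsum : negMulLog ((1 - √t) ^ 2) + negMulLog ((1 + √t) ^ 2) =
      negMulLog (2 * (1 + t)) + 2 * (1 + t) * binEntropy (minorWeight t) := by
    rw [hminor, hmajor, negMulLog_mul (2 * (1 + t)), negMulLog_mul (2 * (1 + t)),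
      binEntropy_eq_negMulLog_add_negMulLog_one_sub]
    ring
  rw [xi, hpsi, hsum, negMulLog, log_mul two_ne_zero (by positivity)]
  field

theorem hasDerivAt_minorWeight (ht : 0 < t) :
    HasDerivAt minorWeight (-((1 - t) / (2 * √t * (1 + t) ^ 2))) t := by
  have hs : √t ≠ 0 := (sqrt_pos.2 ht).ne'
  have hden : 2 * (1 + t) ≠ 0 := by positivity
  refine ((((hasDerivAt_sqrt ht.ne').const_sub 1).pow 2).div
    (((hasDerivAt_id' t).const_add 1).const_mul 2) hden).congr_deriv ?_
  simp only [Pi.pow_apply]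
  field_simp
  linear_combination (4 - 2 * √t) * sq_sqrt ht.le

theorem hasDerivAt_deriv_minorWeight (ht : 0 < t) :
    HasDerivAt (deriv minorWeight) ((1 + 6 * t - 3 * t ^ 2) / (4 * t * √t * (1 + t) ^ 3)) t := by
  have hs : √t ≠ 0 := (sqrt_pos.2 ht).ne'
  have hden : 2 * √t * (1 + t) ^ 2 ≠ 0 := by positivity
  have hderiv := (((hasDerivAt_id' t).const_sub 1).div
    (((hasDerivAt_sqrt ht.ne').const_mul 2).mul (((hasDerivAt_id' t).const_add 1).pow 2))
    hden).neg
  refine (hderiv.congr_of_eventuallyEq ?_).congr_deriv ?_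
  · filter_upwards [Ioi_mem_nhds ht] with x hx
    exact (hasDerivAt_minorWeight hx).deriv
  · simp only [Pi.pow_apply, Pi.mul_apply]
    field_simp
    rw [sq_sqrt ht.le]
    ring

theorem hasDerivAt_xi (ht : 0 < t) (ht₁ : t ≠ 1) :
    HasDerivAt xi (-(deriv minorWeight t * logOdds (minorWeight t))) t := by
  have hentropy :=
    hasDerivAt_binEntropy (minorWeight_ne_zero ht.le ht₁) (minorWeight_lt_one ht.le).ne
  have hweight := (hasDerivAt_minorWeight ht).differentiableAt.hasDerivAt
  refine (((hentropy.comp t hweight).const_sub (log 2)).congr_of_eventuallyEq ?_).congr_deriv ?_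
  · filter_upwards [Ioi_mem_nhds ht] with x hx
    exact xi_eq_log_two_sub_binEntropy (le_of_lt hx)
  · rw [logOdds, mul_comm]

theorem hasDerivAt_deriv_xi (ht : 0 < t) (ht₁ : t ≠ 1) :
    HasDerivAt (deriv xi)
      (deriv minorWeight t ^ 2 / (minorWeight t * (1 - minorWeight t)) -
        deriv (deriv minorWeight) t * logOdds (minorWeight t)) t := by
  have hodds := hasDerivAt_logOdds (minorWeight_ne_zero ht.le ht₁) (minorWeight_lt_one ht.le).ne
  have hweight := (hasDerivAt_minorWeight ht).differentiableAt.hasDerivAt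
  have hweight' := (hasDerivAt_deriv_minorWeight ht).differentiableAt.hasDerivAt
  refine ((hweight'.mul (hodds.comp t hweight)).neg.congr_of_eventuallyEq ?_).congr_deriv ?_
  · filter_upwards [Ioi_mem_nhds ht, isOpen_ne.mem_nhds ht₁] with x hx hx₁
    exact (hasDerivAt_xi hx hx₁).deriv
  · simp only [Function.comp_apply]
    ring

theorem neg_deriv_deriv_xi_sub_two_mul_deriv_xi (ht : 0 < t) (ht₁ : t ≠ 1) :
    -(deriv (deriv xi) t) - 2 * deriv xi t =
      ((1 + 2 * t - 3 * t ^ 2 + 4 * t ^ 3) * logOdds (minorWeight t) - 4 * √t * (1 + t)) /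
        (4 * t * √t * (1 + t) ^ 3) := by
  have hs : √t ≠ 0 := (sqrt_pos.2 ht).ne'
  have hsub : 1 - t ≠ 0 := sub_ne_zero.2 ht₁.symm
  rw [(hasDerivAt_deriv_xi ht ht₁).deriv, (hasDerivAt_xi ht ht₁).deriv,
    (hasDerivAt_deriv_minorWeight ht).deriv, (hasDerivAt_minorWeight ht).deriv,
    minorWeight_mul_one_sub ht.le]
  field_simp
  linear_combination 4 * (1 + t) * sq_sqrt ht.le

-- For `t > 1`, `log (1 - √t)` stands for `log |1 - √t|`.
theorem logOdds_minorWeight (ht : 0 ≤ t) (ht₁ : t ≠ 1) :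
    logOdds (minorWeight t) = 2 * (log (1 + √t) - log (1 - √t)) := by
  have hs : 1 - √t ≠ 0 := sub_ne_zero.2 (Ne.symm (sqrt_eq_one.not.2 ht₁))
  rw [logOdds, one_sub_minorWeight ht, minorWeight, log_div (by positivity) (by positivity),
    log_div (by positivity) (by positivity), log_pow, log_pow]
  push_cast
  ring

theorem four_mul_sqrt_le_logOdds_minorWeight (ht : 0 ≤ t) (ht₁ : t < 1) :
    4 * √t ≤ logOdds (minorWeight t) := by
  have hs : √t < 1 := (sqrt_lt_sqrt ht ht₁).trans_eq sqrt_one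
  have hseries := sum_range_le_log_div (sqrt_nonneg t) hs 1
  rw [log_div (by positivity) (sub_pos.2 hs).ne'] at hseries
  simp only [Finset.sum_range_one, mul_zero, zero_add, pow_one, Nat.cast_zero, div_one] at hseries
  linarith [logOdds_minorWeight ht ht₁.ne]

theorem four_div_sqrt_le_logOdds_minorWeight (ht : 1 < t) :
    4 / √t ≤ logOdds (minorWeight t) := by
  have ht₀ : 0 < t := one_pos.trans ht
  have hbound :=
    four_mul_sqrt_le_logOdds_minorWeight (inv_nonneg.2 ht₀.le) (inv_lt_one_of_one_lt₀ ht)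
  rwa [minorWeight_inv ht₀, sqrt_inv, ← div_eq_mul_inv] at hbound

theorem four_mul_sqrt_mul_one_add_lt_mul_logOdds (ht : 0 < t) (ht₁ : t ≠ 1) :
    4 * √t * (1 + t) < (1 + 2 * t - 3 * t ^ 2 + 4 * t ^ 3) * logOdds (minorWeight t) := by
  have hcubic : 1 + t < 1 + 2 * t - 3 * t ^ 2 + 4 * t ^ 3 := by
    have : 0 < t * ((1 - 3 / 2 * t) ^ 2 + 7 / 4 * t ^ 2) := by positivity
    linarith
  have hcubic_pos : 0 < 1 + 2 * t - 3 * t ^ 2 + 4 * t ^ 3 := by linarith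
  rcases ht₁.lt_or_gt with hlt | hgt
  · calc 4 * √t * (1 + t) < 4 * √t * (1 + 2 * t - 3 * t ^ 2 + 4 * t ^ 3) := by gcongr
      _ = (1 + 2 * t - 3 * t ^ 2 + 4 * t ^ 3) * (4 * √t) := by ring
      _ ≤ _ := by gcongr; exact four_mul_sqrt_le_logOdds_minorWeight ht.le hlt
  · have hcubic' : t * (1 + t) < 1 + 2 * t - 3 * t ^ 2 + 4 * t ^ 3 := by
      have : 0 ≤ t * (2 * t - 1) ^ 2 := by positivity
      linarith
    calc 4 * √t * (1 + t) = t * (1 + t) * (4 / √t) := by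
          field_simp
          linear_combination sq_sqrt ht.le
      _ < (1 + 2 * t - 3 * t ^ 2 + 4 * t ^ 3) * (4 / √t) := by gcongr
      _ ≤ _ := by gcongr; exact four_div_sqrt_le_logOdds_minorWeight hgt

theorem neg_xi_second_deriv_gt_general (ht : 0 < t) (ht₁ : t ≠ 1) :
    -(deriv (deriv xi) t) > 2 * deriv xi t := by
  rw [gt_iff_lt, ← sub_pos, neg_deriv_deriv_xi_sub_two_mul_deriv_xi ht ht₁]
  have hnum := sub_pos.2 (four_mul_sqrt_mul_one_add_lt_mul_logOdds ht ht₁)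
  positivity

/-- For every `t ∈ (0,1)`, `−ξ''(t) > 2·ξ'(t)`. -/
theorem neg_xi_second_deriv_gt :
    ∀ t ∈ Set.Ioo (0 : ℝ) 1, -(deriv (deriv xi) t) > 2 * deriv xi t :=
  fun _ ht => neg_xi_second_deriv_gt_general ht.1 ht.2.ne
end

section
/- Let h(t) = (1/2)(1−t)² log((1−t)²) + (1/2)(1+t)² log((1+t)²) − (1+t²) log(1+t²). Then for every x ∈ (0,1), 2x·(h'(x))² > (3−x²)·h(x)·h'(x) + x·(1+x²)·h(x)·h''(x), where h'(x) = 2((1+x) log(1+x) − (1−x) log(1−x) − x log(1+x²)) and h''(x) = 4/(1+x²) − 2 log((1+x²)/(1−x²)). -/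
/-- `h(t) = (1/2)(1−t)² log((1−t)²) + (1/2)(1+t)² log((1+t)²) − (1+t²) log(1+t²)`
(note `Real.log 0 = 0`). -/
noncomputable def hFun (t : ℝ) : ℝ :=
  (1 / 2) * (1 - t) ^ 2 * Real.log ((1 - t) ^ 2) +
    (1 / 2) * (1 + t) ^ 2 * Real.log ((1 + t) ^ 2) -
    (1 + t ^ 2) * Real.log (1 + t ^ 2)

/-- The derivative of `h`:
`h'(t) = 2((1+t) log(1+t) − (1−t) log(1−t) − t log(1+t²))`. -/
noncomputable def hFun' (t : ℝ) : ℝ :=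
  2 * ((1 + t) * Real.log (1 + t) - (1 - t) * Real.log (1 - t) -
    t * Real.log (1 + t ^ 2))

/-- The second derivative of `h`: `h''(t) = 4/(1+t²) − 2 log((1+t²)/(1−t²))`. -/
noncomputable def hFun'' (t : ℝ) : ℝ :=
  4 / (1 + t ^ 2) - 2 * Real.log ((1 + t ^ 2) / (1 - t ^ 2))

/-!
With `a = artanh x` and `b = artanh (x ^ 2)`, the functions `h`, `h'` and `(1 + x ^ 2) h''` are
affine in `(a, b)`, so the gap between the two sides is quadratic in `(a, b)`. For `a ≥ b ≥ 0` it
increases when `a` and `b` grow by the same amount, and it is concave in `a`. Hence `b` may be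
lowered to its first Taylor approximation `x ^ 2` with `a - b` kept fixed, and positivity then only
has to be checked at the two ends of `0 ≤ a - b ≤ x + x ^ 3 / 3 + x ^ 5 / 5 - x ^ 2`. At the upper
end `a` becomes a Taylor polynomial of `artanh x`, and the gap is `x ^ 7` times a polynomial that is
visibly positive on `(0, 1)`.
-/

open Real Set

lemma hasDerivAt_log_one_add_sub_sum_range (n : ℕ) {x : ℝ} (hx : 1 + x ≠ 0) :
    HasDerivAt (fun y ↦ log (1 + y) - ∑ i ∈ Finset.range n, (-1) ^ i * y ^ (i + 1) / (i + 1))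
      ((-x) ^ n / (1 + x)) x := by
  have hlog : HasDerivAt (fun y ↦ log (1 + y)) (1 / (1 + x)) x :=
    ((hasDerivAt_id x).const_add 1).log hx
  have hterm (i : ℕ) : HasDerivAt (fun y : ℝ ↦ (-1) ^ i * y ^ (i + 1) / (i + 1)) ((-x) ^ i) x := by
    refine (((hasDerivAt_pow (i + 1) x).const_mul _).div_const _).congr_deriv ?_
    rw [neg_pow x, add_tsub_cancel_right]
    push_cast
    field_simp
  have hgeom : 1 / (1 + x) - ∑ i ∈ Finset.range n, (-x) ^ i = (-x) ^ n / (1 + x) := by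
    have := geom_sum_mul_neg (-x) n
    rw [sub_neg_eq_add] at this
    field_simp
    linarith
  exact hgeom ▸ hlog.sub (HasDerivAt.fun_sum fun i _ ↦ hterm i)

lemma sum_range_le_log_one_add_of_even {n : ℕ} (hn : Even n) {x : ℝ} (hx : 0 ≤ x) :
    ∑ i ∈ Finset.range n, (-1) ^ i * x ^ (i + 1) / (i + 1) ≤ log (1 + x) := by
  have hderiv (y : ℝ) (hy : 0 ≤ y) :=
    hasDerivAt_log_one_add_sub_sum_range n (show 1 + y ≠ 0 by positivity)
  have hmono := monotoneOn_of_hasDerivWithinAt_nonneg (convex_Ici 0)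
    (fun y hy ↦ (hderiv y hy).continuousAt.continuousWithinAt)
    (fun y hy ↦ (hderiv y (interior_subset hy)).hasDerivWithinAt)
    (fun y hy ↦ div_nonneg (hn.pow_nonneg _) (add_nonneg zero_le_one (interior_subset hy)))
  simpa using hmono self_mem_Ici hx hx

lemma log_one_add_le_sum_range_of_odd {n : ℕ} (hn : Odd n) {x : ℝ} (hx : 0 ≤ x) :
    log (1 + x) ≤ ∑ i ∈ Finset.range n, (-1) ^ i * x ^ (i + 1) / (i + 1) := by
  have hderiv (y : ℝ) (hy : 0 ≤ y) :=
    hasDerivAt_log_one_add_sub_sum_range n (show 1 + y ≠ 0 by positivity)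
  have hanti := antitoneOn_of_hasDerivWithinAt_nonpos (convex_Ici 0)
    (fun y hy ↦ (hderiv y hy).continuousAt.continuousWithinAt)
    (fun y hy ↦ (hderiv y (interior_subset hy)).hasDerivWithinAt)
    (fun y hy ↦ div_nonpos_of_nonpos_of_nonneg
      (hn.pow_nonpos (neg_nonpos.2 (interior_subset hy)))
      (add_nonneg zero_le_one (interior_subset hy)))
  simpa using hanti self_mem_Ici hx hx

lemma two_mul_artanh {x : ℝ} (hx : x ∈ Ioo (-1) 1) :
    2 * artanh x = log (1 + x) - log (1 - x) := by
  rw [artanh_eq_half_log (Ioo_subset_Icc_self hx),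
    log_div (by linarith [hx.1]) (by linarith [hx.2])]
  ring

lemma two_mul_artanh_sq {x : ℝ} (hx : x ∈ Ioo (-1) 1) :
    2 * artanh (x ^ 2) = log (1 + x ^ 2) - log (1 + x) - log (1 - x) := by
  have hsq : x ^ 2 < 1 := (sq_lt_one_iff_abs_lt_one x).2 (abs_lt.2 hx)
  rw [two_mul_artanh ⟨by linarith [sq_nonneg x], hsq⟩, show 1 - x ^ 2 = (1 + x) * (1 - x) by ring,
    log_mul (by linarith [hx.1]) (by linarith [hx.2])]
  ring

lemma self_le_artanh {x : ℝ} (hx₀ : 0 ≤ x) (hx₁ : x < 1) : x ≤ artanh x := by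
  rw [artanh_eq_half_log ⟨by linarith, hx₁.le⟩]
  simpa using sum_range_le_log_div hx₀ hx₁ 1

lemma artanh_sub_artanh_sq_le {x : ℝ} (hx₀ : 0 ≤ x) (hx₁ : x < 1) :
    artanh x - artanh (x ^ 2) ≤ x + x ^ 3 / 3 + x ^ 5 / 5 - x ^ 2 := by
  have hx : x ∈ Ioo (-1) 1 := ⟨by linarith, hx₁⟩
  have hupper := log_one_add_le_sum_range_of_odd (n := 5) (by decide) hx₀
  have hlower := sum_range_le_log_one_add_of_even (n := 2) (by decide) (sq_nonneg x)
  simp only [Finset.sum_range_succ, Finset.sum_range_zero] at hupper hlower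
  push_cast at hupper hlower
  linarith [two_mul_artanh hx, two_mul_artanh_sq hx]

lemma hFun_eq_artanh {x : ℝ} (hx : x ∈ Ioo (-1) 1) :
    hFun x = 4 * x * artanh x - 2 * (1 + x ^ 2) * artanh (x ^ 2) := by
  rw [hFun, log_pow, log_pow]
  push_cast
  linear_combination (-2 * x) * two_mul_artanh hx + (1 + x ^ 2) * two_mul_artanh_sq hx

lemma hFun'_eq_artanh {x : ℝ} (hx : x ∈ Ioo (-1) 1) :
    hFun' x = 4 * (artanh x - x * artanh (x ^ 2)) := by
  rw [hFun']
  linear_combination (-2) * two_mul_artanh hx + 2 * x * two_mul_artanh_sq hx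

lemma hFun''_eq_artanh {x : ℝ} (hx : x ∈ Ioo (-1) 1) :
    hFun'' x = 4 / (1 + x ^ 2) - 4 * artanh (x ^ 2) := by
  have hsq : x ^ 2 ≤ 1 := (sq_le_one_iff_abs_le_one x).2 (abs_lt.2 hx).le
  rw [hFun'', artanh_eq_half_log ⟨by linarith [sq_nonneg x], hsq⟩]
  ring

/-- One eighth of the difference of the two sides of the inequality, as a quadratic polynomial in
`a = artanh x` and `b = artanh (x ^ 2)`, here treated as independent variables. -/
def artanhGap (x a b : ℝ) : ℝ :=
  4 * x * (a - x * b) ^ 2 -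
    (2 * x * a - (1 + x ^ 2) * b) * ((3 - x ^ 2) * a - 4 * x * b + x)

lemma hFun_gap_eq_artanhGap {x : ℝ} (hx : x ∈ Ioo (-1) 1) :
    2 * x * hFun' x ^ 2 -
        ((3 - x ^ 2) * hFun x * hFun' x + x * (1 + x ^ 2) * hFun x * hFun'' x) =
      8 * artanhGap x (artanh x) (artanh (x ^ 2)) := by
  rw [hFun_eq_artanh hx, hFun'_eq_artanh hx, hFun''_eq_artanh hx, artanhGap]
  field_simp
  ring

lemma artanhGap_add_left (x b d : ℝ) :
    artanhGap x (b + d) b =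
      (1 - x) ^ 2 * (3 - x ^ 2) * b ^ 2 +
        ((3 - 4 * x + 2 * x ^ 2 + 4 * x ^ 3 - x ^ 4) * d + x * (1 - x) ^ 2) * b -
        2 * x * (1 - x ^ 2) * d ^ 2 - 2 * x ^ 2 * d := by
  unfold artanhGap
  ring

lemma artanhGap_add_le_artanhGap_add {x b b' d : ℝ} (hx : x ∈ Icc 0 1) (hb : 0 ≤ b) (hbb' : b ≤ b')
    (hd : 0 ≤ d) : artanhGap x (b + d) b ≤ artanhGap x (b' + d) b' := by
  obtain ⟨hx₀, hx₁⟩ := hx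
  have hsq : 0 ≤ 3 - x ^ 2 := by nlinarith
  have hcoeff : 0 ≤ 3 - 4 * x + 2 * x ^ 2 + 4 * x ^ 3 - x ^ 4 := by
    have : 0 ≤ 1 - x := by linarith
    rw [show 3 - 4 * x + 2 * x ^ 2 + 4 * x ^ 3 - x ^ 4 =
      1 + 2 * (1 - x) ^ 2 + 3 * x ^ 3 + x ^ 3 * (1 - x) by ring]
    positivity
  rw [artanhGap_add_left, artanhGap_add_left]
  gcongr

lemma concaveOn_quadratic {a : ℝ} (ha : a ≤ 0) (b c : ℝ) :
    ConcaveOn ℝ univ fun x ↦ a * x ^ 2 + b * x + c := by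
  have hsq : ConcaveOn ℝ univ fun x : ℝ ↦ a * x ^ 2 :=
    (even_two.convexOn_pow.smul (neg_nonneg.2 ha)).neg.congr fun x _ ↦ by simp
  exact (hsq.add ((LinearMap.mulLeft ℝ b).concaveOn convex_univ)).add_const c

lemma concaveOn_artanhGap {x : ℝ} (hx : x ∈ Icc 0 1) (b : ℝ) :
    ConcaveOn ℝ univ fun a ↦ artanhGap x a b := by
  have hlead : -2 * x * (1 - x ^ 2) ≤ 0 := by
    have : 0 ≤ x * (1 - x ^ 2) := mul_nonneg hx.1 (by nlinarith [hx.1, hx.2])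
    linarith
  convert concaveOn_quadratic hlead ((1 + x ^ 2) * (3 - x ^ 2) * b - 2 * x ^ 2)
    (x * (1 + x ^ 2) * b - 4 * x * b ^ 2) using 2 with a
  unfold artanhGap
  ring

lemma artanhGap_sq_sq_pos {x : ℝ} (hx : x ∈ Ioo 0 1) : 0 < artanhGap x (x ^ 2) (x ^ 2) := by
  obtain ⟨hx₀, hx₁⟩ := hx
  have : 0 < 1 - x := by linarith
  have : 0 < 3 - x ^ 2 := by nlinarith
  rw [show artanhGap x (x ^ 2) (x ^ 2) = x ^ 3 * (1 - x) ^ 2 * (x * (3 - x ^ 2) + 1) by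
    unfold artanhGap; ring]
  positivity

lemma artanhGap_taylor_pos {x : ℝ} (hx : x ∈ Ioo 0 1) :
    0 < artanhGap x (x + x ^ 3 / 3 + x ^ 5 / 5) (x ^ 2) := by
  obtain ⟨hx₀, hx₁⟩ := hx
  have : 0 < 1 - x ^ 2 := by nlinarith
  rw [show artanhGap x (x + x ^ 3 / 3 + x ^ 5 / 5) (x ^ 2) =
      x ^ 7 * (8 / 45 + 182 / 225 * x ^ 2 + 1 / 75 * x ^ 2 * (1 - x ^ 2) + 2 / 25 * x ^ 6) by
    unfold artanhGap; ring]
  positivity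

lemma artanhGap_pos {x a b : ℝ} (hx : x ∈ Ioo 0 1) (hb : x ^ 2 ≤ b)
    (hab : a - b ∈ Icc 0 (x + x ^ 3 / 3 + x ^ 5 / 5 - x ^ 2)) : 0 < artanhGap x a b := by
  have hx' := Ioo_subset_Icc_self hx
  calc
    0 < min (artanhGap x (x ^ 2) (x ^ 2)) (artanhGap x (x + x ^ 3 / 3 + x ^ 5 / 5) (x ^ 2)) :=
      lt_min (artanhGap_sq_sq_pos hx) (artanhGap_taylor_pos hx)
    _ ≤ artanhGap x (x ^ 2 + (a - b)) (x ^ 2) :=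
      (concaveOn_artanhGap hx' (x ^ 2)).min_le_of_mem_Icc (mem_univ _) (mem_univ _)
        ⟨by linarith [hab.1], by linarith [hab.2]⟩
    _ ≤ artanhGap x (b + (a - b)) b := artanhGap_add_le_artanhGap_add hx' (sq_nonneg x) hb hab.1
    _ = artanhGap x a b := by rw [add_sub_cancel]

/-- For every `x ∈ (0,1)`,
`2x·(h'(x))² > (3−x²)·h(x)·h'(x) + x·(1+x²)·h(x)·h''(x)`. -/
theorem hFun_convexity_inequality :
    ∀ x ∈ Set.Ioo (0 : ℝ) 1,
      2 * x * hFun' x ^ 2 >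
        (3 - x ^ 2) * hFun x * hFun' x + x * (1 + x ^ 2) * hFun x * hFun'' x := by
  intro x hx
  have ⟨hx₀, hx₁⟩ := hx
  have hsq : x ^ 2 < x := by nlinarith
  have hb : x ^ 2 ≤ artanh (x ^ 2) := self_le_artanh (sq_nonneg x) (hsq.trans hx₁)
  have hab : 0 ≤ artanh x - artanh (x ^ 2) :=
    sub_nonneg.2 (artanh_le_artanh (by linarith [sq_nonneg x]) hx₁ hsq.le)
  have hgap := artanhGap_pos hx hb ⟨hab, artanh_sub_artanh_sq_le hx₀.le hx₁⟩
  linarith [hFun_gap_eq_artanhGap (x := x) ⟨by linarith, hx₁⟩]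
end
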